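/- Let N,k ≥ 1 be integers, 0 ≤ γ < 1, p > 1, and ε = 1/(2(N+2)+k). For any p > 1 there exists a constant B > 0 such that: if u0 ∈ C₀(ℝ^{N+k}), u0 ≥ 0, satisfies ∫_{ℝ^{N+k}} u0(x,y)·exp(−ε√(1 + |x|⁴ + |y|²)) dx dy ≥ B, then there is no global nonnegative weak solution u ∈ C([0,∞), C₀(ℝ^{N+k})) of the Grushin heat equation with nonlinear memory u_t − Δ_G u = ∫_0^t (t−s)^{−γ} |u(s)|^{p−1}u(s) ds with initial datum u(·,0) = u0. -/

import Mathlib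

open MeasureTheory Real Filter
open scoped ENNReal NNReal

noncomputable section

abbrev Euc (n : ℕ) : Type := EuclideanSpace ℝ (Fin n)

/-- Second derivative of `f` at `z`, taken twice in the direction `v`. -/
def secondDeriv {N k : ℕ} (f : Euc N × Euc k → ℝ) (z v : Euc N × Euc k) : ℝ :=
  fderiv ℝ (fun w => fderiv ℝ f w v) z v

/-- The Laplacian in the `x`-variables. -/
def laplacianX {N k : ℕ} (f : Euc N × Euc k → ℝ) (z : Euc N × Euc k) : ℝ :=
  ∑ i : Fin N, secondDeriv f z (EuclideanSpace.single i 1, 0)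

/-- The Laplacian in the `y`-variables. -/
def laplacianY {N k : ℕ} (f : Euc N × Euc k → ℝ) (z : Euc N × Euc k) : ℝ :=
  ∑ j : Fin k, secondDeriv f z (0, EuclideanSpace.single j 1)

/-- The Grushin operator `Δ_G = Δ_x + |x|² Δ_y`. -/
def grushin {N k : ℕ} (f : Euc N × Euc k → ℝ) (z : Euc N × Euc k) : ℝ :=
  laplacianX f z + ‖z.1‖ ^ 2 * laplacianY f z

/-- The power nonlinearity `|v|^(p-1) · v`. -/
def absPow (p v : ℝ) : ℝ := |v| ^ (p - 1) * v

/-- The Riemann–Liouville fractional integral `I^α_{0|t} f`. -/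
def fracInt (α : ℝ) (f : ℝ → ℝ) (t : ℝ) : ℝ :=
  (1 / Real.Gamma α) * ∫ s in Set.Ioc (0 : ℝ) t, (t - s) ^ (α - 1) * f s


/-- Weak solution on `ℝ^{N+k} × [0,T]` of
`u_t − Δ_G u = ∫_0^t (t−s)^{−γ}|u(s)|^{p−1}u(s) ds`, `u(·,0) = u0` (with `α = 1 − γ`). -/
def IsWeakSolutionMemory (N k : ℕ) (γ p T : ℝ) (u0 : Euc N × Euc k → ℝ)
    (u : Euc N × Euc k → ℝ → ℝ) : Prop :=
  LocallyIntegrableOn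
      (fun q : (Euc N × Euc k) × ℝ => fracInt (1 - γ) (fun s => absPow p (u q.1 s)) q.2)
      (Set.univ ×ˢ Set.Ioo 0 T) volume ∧
  ∀ φ : Euc N × Euc k → ℝ → ℝ,
    ContDiff ℝ 2 (fun q : (Euc N × Euc k) × ℝ => φ q.1 q.2) →
    HasCompactSupport (fun q : (Euc N × Euc k) × ℝ => φ q.1 q.2) →
    (∀ z, φ z T = 0) →
    ((∫ z, u z T * φ z T) - ∫ z, u0 z * φ z 0) =
      Real.Gamma (1 - γ) *
        (∫ t in Set.Ioc (0 : ℝ) T, ∫ z,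
          fracInt (1 - γ) (fun s => absPow p (u z s)) t * φ z t) +
      (∫ t in Set.Ioc (0 : ℝ) T, ∫ z, u z t * grushin (fun w => φ w t) z) +
      (∫ t in Set.Ioc (0 : ℝ) T, ∫ z, u z t * deriv (φ z) t)

/-!
Fix a horizon `T` and test the equation against `(T - t) ^ (m + 1) * w`, where `w` is a compactly
supported truncation of `ψ = exp (-ε √(1 + |x|⁴ + |y|²))`. By Fubini and the beta integral, the
memory term becomes a positive multiple of `∬ u ^ p (T - t) ^ (m + 2 - γ) w`. Since
`Δ_G ψ ≥ -L ψ`, the remaining terms are linear in `u`, and once `m` is so large that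
`m + 2 - γ ≤ m p`, Young's inequality absorbs them into the memory term. Removing the truncation
bounds `∫ u0 ψ` by a constant independent of `u`, so no solution exists when `∫ u0 ψ` is larger.
-/

lemma exists_mul_le_mul_rpow_add {p κ A : ℝ} (hp : 1 < p) (hκ : 0 < κ) (hA : 0 ≤ A) :
    ∃ C, 0 ≤ C ∧ ∀ x, 0 ≤ x → A * x ≤ κ * x ^ p + C := by
  set x₀ : ℝ := (A / κ) ^ (1 / (p - 1))
  refine ⟨A * x₀, by positivity, fun x hx ↦ ?_⟩
  have hp' : 0 < p - 1 := by linarith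
  have hxp : 0 ≤ κ * x ^ p := by positivity
  rcases le_total x x₀ with hle | hge
  · linarith [mul_le_mul_of_nonneg_left hle hA]
  · have hA_le : A ≤ κ * x ^ (p - 1) := by
      rw [← div_le_iff₀' hκ]
      calc A / κ = x₀ ^ (p - 1) := by
            rw [← rpow_mul (by positivity), one_div_mul_cancel hp'.ne', rpow_one]
        _ ≤ x ^ (p - 1) := rpow_le_rpow (by positivity) hge hp'.le
    calc A * x ≤ κ * x ^ (p - 1) * x := mul_le_mul_of_nonneg_right hA_le hx
      _ = κ * x ^ p := by
        rw [mul_assoc, ← rpow_add_one' hx (by linarith), sub_add_cancel]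
      _ ≤ κ * x ^ p + A * x₀ := le_add_of_nonneg_right (by positivity)

lemma exists_mul_mul_pow_le {p κ A T r : ℝ} {m : ℕ} (hp : 1 < p) (hκ : 0 < κ) (hA : 0 ≤ A)
    (hT : 0 ≤ T) (hr : 0 ≤ r) (hrm : r ≤ m * p) :
    ∃ C, 0 ≤ C ∧ ∀ v, 0 ≤ v → ∀ τ ∈ Set.Icc 0 T,
      A * (v * τ ^ m) ≤ κ * (v ^ p * τ ^ r) + C := by
  have hp0 : 0 < p := by linarith
  have he : 0 ≤ m - r / p := sub_nonneg.2 ((div_le_iff₀ hp0).2 hrm)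
  obtain ⟨C, hC0, hC⟩ :=
    exists_mul_le_mul_rpow_add hp hκ (A := A * T ^ (m - r / p)) (by positivity)
  refine ⟨C, hC0, fun v hv τ ⟨hτ0, hτT⟩ ↦ ?_⟩
  have hpow : τ ^ m = τ ^ (r / p) * τ ^ (m - r / p) := by
    rw [← rpow_add_of_nonneg hτ0 (by positivity) he, add_sub_cancel, rpow_natCast]
  calc A * (v * τ ^ m) = A * τ ^ (m - r / p) * (v * τ ^ (r / p)) := by rw [hpow]; ring
    _ ≤ A * T ^ (m - r / p) * (v * τ ^ (r / p)) := by gcongr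
    _ ≤ κ * (v * τ ^ (r / p)) ^ p + C := hC _ (by positivity)
    _ = κ * (v ^ p * τ ^ r) + C := by
      rw [mul_rpow hv (by positivity), ← rpow_mul hτ0, div_mul_cancel₀ _ hp0.ne']

lemma absPow_of_nonneg {p v : ℝ} (hp : 0 < p) (hv : 0 ≤ v) : absPow p v = v ^ p := by
  rw [absPow, abs_of_nonneg hv, ← rpow_add_one' hv (by linarith), sub_add_cancel]

lemma integral_rpow_mul_sub_rpow {α β a : ℝ} (hα : 0 < α) (hβ : 0 < β) (ha : 0 < a) :
    ∫ x in (0 : ℝ)..a, x ^ (α - 1) * (a - x) ^ (β - 1) =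
      ProbabilityTheory.beta α β * a ^ (α + β - 1) := by
  have hbeta : Complex.betaIntegral α β = (ProbabilityTheory.beta α β : ℝ) := by
    rw [Complex.betaIntegral_eq_Gamma_mul_div _ _ (by simpa) (by simpa), ProbabilityTheory.beta,
      ← Complex.ofReal_add]
    simp only [Complex.Gamma_ofReal, Complex.ofReal_div, Complex.ofReal_mul]
  have hscaled := Complex.betaIntegral_scaled α β ha
  rw [hbeta] at hscaled
  apply Complex.ofReal_injective
  rw [← intervalIntegral.integral_ofReal]
  push_cast [Complex.ofReal_cpow ha.le]
  rw [mul_comm, ← hscaled]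
  refine intervalIntegral.integral_congr fun x hx ↦ ?_
  rw [Set.uIcc_of_le ha.le] at hx
  simp [Complex.ofReal_cpow hx.1, Complex.ofReal_cpow (sub_nonneg.2 hx.2)]

lemma integrableOn_sub_rpow {α : ℝ} (hα : 0 < α) {t : ℝ} (ht : 0 ≤ t) :
    IntegrableOn (fun s ↦ (t - s) ^ (α - 1)) (Set.Ioc 0 t) := by
  rw [← intervalIntegrable_iff_integrableOn_Ioc_of_le ht]
  simpa using ((intervalIntegral.intervalIntegrable_rpow' (a := 0) (b := t)
    (r := α - 1) (by linarith)).comp_sub_left t).symm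

lemma abs_fracInt_le {α t M : ℝ} {f : ℝ → ℝ} (hα : 0 < α) (ht : 0 ≤ t)
    (hf : ∀ s ∈ Set.Ioc 0 t, |f s| ≤ M) :
    |fracInt α f t| ≤ M * t ^ α / Gamma (α + 1) := by
  have hkernel : ∫ s in Set.Ioc 0 t, (t - s) ^ (α - 1) = t ^ α / α := by
    rw [← intervalIntegral.integral_of_le ht,
      intervalIntegral.integral_comp_sub_left (f := fun s : ℝ ↦ (s ^ (α - 1) : ℝ)) t,
      integral_rpow (Or.inl (by linarith))]
    simp [zero_rpow hα.ne']
  have hint : |∫ s in Set.Ioc 0 t, (t - s) ^ (α - 1) * f s| ≤ t ^ α / α * M := by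
    rw [← hkernel, ← integral_mul_const, ← norm_eq_abs]
    refine norm_integral_le_of_norm_le ((integrableOn_sub_rpow hα ht).mul_const M) ?_
    refine ae_restrict_of_forall_mem measurableSet_Ioc fun s hs ↦ ?_
    have hk : 0 ≤ (t - s) ^ (α - 1) := rpow_nonneg (sub_nonneg.2 hs.2) _
    rw [norm_mul, norm_of_nonneg hk]
    exact mul_le_mul_of_nonneg_left (hf s hs) hk
  have hΓ := Gamma_pos_of_pos hα
  calc |fracInt α f t| = 1 / Gamma α * |∫ s in Set.Ioc 0 t, (t - s) ^ (α - 1) * f s| := by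
        rw [fracInt, abs_mul, abs_of_pos (one_div_pos.2 hΓ)]
    _ ≤ 1 / Gamma α * (t ^ α / α * M) := by gcongr
    _ = M * t ^ α / Gamma (α + 1) := by rw [Gamma_add_one hα.ne']; field_simp

lemma integrable_indicator_mul_convolution {α β T : ℝ} {f : ℝ → ℝ} (hα : 0 < α) (hβ : 1 ≤ β)
    (hT : 0 ≤ T) (hf : IntegrableOn f (Set.Ioc 0 T)) :
    Integrable (Function.uncurry fun t s : ℝ ↦
      (Set.Ioc 0 T).indicator (fun t ↦ (T - t) ^ (β - 1)) t *
        ((Set.Ioc 0 T).indicator f s * (Set.Icc 0 T).indicator (fun x ↦ x ^ (α - 1)) (t - s)))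
      (volume.prod volume) := by
  have hkernel : IntegrableOn (fun x : ℝ ↦ x ^ (α - 1)) (Set.Icc 0 T) := by
    rw [integrableOn_Icc_iff_integrableOn_Ioc, ← intervalIntegrable_iff_integrableOn_Ioc_of_le hT]
    exact intervalIntegral.intervalIntegrable_rpow' (by linarith)
  have hconv := Integrable.convolution_integrand (ContinuousLinearMap.mul ℝ ℝ)
    (hf.integrable_indicator measurableSet_Ioc) (hkernel.integrable_indicator measurableSet_Icc)
  refine hconv.bdd_mul (c := T ^ (β - 1)) (Measurable.aestronglyMeasurable ?_) ?_
  · exact ((by fun_prop : Measurable fun t : ℝ ↦ (T - t) ^ (β - 1)).indicator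
      measurableSet_Ioc).comp measurable_fst
  · refine .of_forall fun q ↦ ?_
    by_cases hq : q.1 ∈ Set.Ioc 0 T
    · rw [Set.indicator_of_mem hq, norm_of_nonneg (rpow_nonneg (sub_nonneg.2 hq.2) _)]
      exact rpow_le_rpow (sub_nonneg.2 hq.2) (by linarith [hq.1]) (by linarith)
    · rw [Set.indicator_of_notMem hq, norm_zero]
      positivity

lemma integral_indicator_mul_indicator_sub {α t T : ℝ} (f : ℝ → ℝ) (ht : t ∈ Set.Ioc 0 T) :
    ∫ s, (Set.Ioc 0 T).indicator f s * (Set.Icc 0 T).indicator (fun x ↦ x ^ (α - 1)) (t - s) =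
      ∫ s in Set.Ioc 0 t, (t - s) ^ (α - 1) * f s := by
  rw [← integral_indicator measurableSet_Ioc]
  congr 1 with s
  simp only [Set.indicator_apply, Set.mem_Ioc, Set.mem_Icc]
  have htT := ht.2
  split_ifs <;> grind

lemma integral_indicator_sub_rpow_mul_indicator_sub {α β s T : ℝ} (hα : 0 < α) (hβ : 0 < β)
    (hs : s ∈ Set.Ioo 0 T) :
    ∫ t, (Set.Ioc 0 T).indicator (fun t ↦ (T - t) ^ (β - 1)) t *
        (Set.Icc 0 T).indicator (fun x ↦ x ^ (α - 1)) (t - s) =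
      ProbabilityTheory.beta α β * (T - s) ^ (α + β - 1) := by
  obtain ⟨hs0, hsT⟩ := hs
  have hsub : 0 < T - s := sub_pos.2 hsT
  rw [← integral_add_right_eq_self _ s, ← integral_rpow_mul_sub_rpow hα hβ hsub,
    intervalIntegral.integral_of_le hsub.le, ← integral_Icc_eq_integral_Ioc,
    ← integral_indicator measurableSet_Icc]
  congr 1 with x
  simp only [Set.indicator_apply, Set.mem_Ioc, Set.mem_Icc, add_sub_cancel_right, sub_sub]
  rw [add_comm s x]
  split_ifs <;> grind

lemma integral_sub_rpow_mul_integral_sub_rpow {α β T : ℝ} {f : ℝ → ℝ} (hα : 0 < α) (hβ : 1 ≤ β)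
    (hT : 0 ≤ T) (hf : IntegrableOn f (Set.Ioc 0 T)) :
    ∫ t in Set.Ioc 0 T, (T - t) ^ (β - 1) * ∫ s in Set.Ioc 0 t, (t - s) ^ (α - 1) * f s =
      ProbabilityTheory.beta α β * ∫ s in Set.Ioc 0 T, (T - s) ^ (α + β - 1) * f s := by
  set K := (Set.Icc 0 T).indicator fun x : ℝ ↦ x ^ (α - 1)
  set A := (Set.Ioc 0 T).indicator fun t ↦ (T - t) ^ (β - 1)
  calc ∫ t in Set.Ioc 0 T, (T - t) ^ (β - 1) * ∫ s in Set.Ioc 0 t, (t - s) ^ (α - 1) * f s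
    _ = ∫ t, ∫ s, A t * ((Set.Ioc 0 T).indicator f s * K (t - s)) := by
      rw [← integral_indicator measurableSet_Ioc]
      congr 1 with t
      rw [integral_const_mul]
      by_cases ht : t ∈ Set.Ioc 0 T
      · simp only [A, Set.indicator_of_mem ht, K, integral_indicator_mul_indicator_sub f ht]
      · simp only [A, Set.indicator_of_notMem ht, zero_mul]
    _ = ∫ s, ∫ t, A t * ((Set.Ioc 0 T).indicator f s * K (t - s)) :=
      integral_integral_swap (integrable_indicator_mul_convolution hα hβ hT hf)
    _ = ∫ s in Set.Ioo 0 T, (∫ t, A t * K (t - s)) * f s := by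
      simp_rw [mul_left_comm (A _), integral_const_mul]
      rw [← integral_Ioc_eq_integral_Ioo, ← integral_indicator measurableSet_Ioc]
      congr 1 with s
      rw [mul_comm, Set.indicator_mul_right]
    _ = ProbabilityTheory.beta α β * ∫ s in Set.Ioc 0 T, (T - s) ^ (α + β - 1) * f s := by
      rw [integral_Ioc_eq_integral_Ioo, ← integral_const_mul]
      refine setIntegral_congr_fun measurableSet_Ioo fun s hs ↦ ?_
      simp only [A, K]
      rw [integral_indicator_sub_rpow_mul_indicator_sub hα (by linarith) hs, mul_assoc]

theorem fracInt_fracInt {α β T : ℝ} {f : ℝ → ℝ} (hα : 0 < α) (hβ : 1 ≤ β) (hT : 0 ≤ T)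
    (hf : IntegrableOn f (Set.Ioc 0 T)) :
    fracInt β (fracInt α f) T = fracInt (α + β) f T := by
  have hΓα := (Gamma_pos_of_pos hα).ne'
  have hΓβ := (Gamma_pos_of_pos (by linarith : 0 < β)).ne'
  simp only [fracInt, mul_left_comm _ (1 / Gamma α), integral_const_mul]
  rw [integral_sub_rpow_mul_integral_sub_rpow hα hβ hT hf, ProbabilityTheory.beta]
  field_simp

lemma integral_sub_pow_mul_fracInt {α T : ℝ} {f : ℝ → ℝ} (hα : 0 < α) (hT : 0 ≤ T)
    (hf : IntegrableOn f (Set.Ioc 0 T)) (n : ℕ) :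
    ∫ t in Set.Ioc 0 T, (T - t) ^ n * fracInt α f t =
      Gamma (n + 1) / Gamma (α + n + 1) * ∫ s in Set.Ioc 0 T, (T - s) ^ (α + n) * f s := by
  have hsemigroup := fracInt_fracInt hα (β := n + 1) (by simp) hT hf
  have hΓ := (Gamma_pos_of_pos (by positivity : (0 : ℝ) < n + 1)).ne'
  simp only [fracInt.eq_1 _ _ T, add_sub_cancel_right, rpow_natCast, ← add_assoc] at hsemigroup
  field_simp at hsemigroup ⊢
  linarith

section Slab

/-- The product of `μ` with Lebesgue measure on the time interval `(0, T]`. -/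
abbrev slabMeasure {Z : Type*} [MeasurableSpace Z] (μ : Measure Z) (T : ℝ) : Measure (Z × ℝ) :=
  μ.prod (volume.restrict (Set.Ioc 0 T))

variable {Z : Type*} [MeasurableSpace Z] {μ : Measure Z} {T K : ℝ}

lemma ae_slabMeasure_mem_Ioc : ∀ᵐ q ∂slabMeasure μ T, q.2 ∈ Set.Ioc 0 T :=
  Measure.quasiMeasurePreserving_snd.ae (ae_restrict_mem measurableSet_Ioc)

lemma integral_slabMeasure_fst [SFinite μ] (hT : 0 ≤ T) (f : Z → ℝ) :
    ∫ q, f q.1 ∂slabMeasure μ T = T * ∫ z, f z ∂μ := by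
  rw [integral_fun_fst, measureReal_restrict_apply_univ, volume_real_Ioc_of_le hT, sub_zero,
    smul_eq_mul]

lemma integrable_bounded_mul_prod {a : Z → ℝ → ℝ} {b : Z → ℝ} {η : ℝ → ℝ}
    (ha : AEStronglyMeasurable (fun q : Z × ℝ ↦ a q.1 q.2) (slabMeasure μ T))
    (haK : ∀ z, ∀ t ∈ Set.Ioc 0 T, |a z t| ≤ K) (hη : ContinuousOn η (Set.Icc 0 T))
    (hb : Integrable b μ) :
    Integrable (fun q : Z × ℝ ↦ a q.1 q.2 * (η q.2 * b q.1)) (slabMeasure μ T) := by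
  have hηb : Integrable (fun q : Z × ℝ ↦ η q.2 * b q.1) (slabMeasure μ T) := by
    simpa only [mul_comm] using
      hb.mul_prod (hη.integrableOn_Icc.mono_set Set.Ioc_subset_Icc_self)
  refine hηb.bdd_mul (c := K) ha ?_
  filter_upwards [ae_slabMeasure_mem_Ioc] with q hq
  exact haK q.1 q.2 hq

lemma integral_integral_bounded_mul_prod [SFinite μ] {a : Z → ℝ → ℝ} {b : Z → ℝ} {η : ℝ → ℝ}
    (ha : AEStronglyMeasurable (fun q : Z × ℝ ↦ a q.1 q.2) (slabMeasure μ T))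
    (haK : ∀ z, ∀ t ∈ Set.Ioc 0 T, |a z t| ≤ K) (hη : ContinuousOn η (Set.Icc 0 T))
    (hb : Integrable b μ) :
    ∫ t in Set.Ioc 0 T, ∫ z, a z t * (η t * b z) ∂μ =
      ∫ q, a q.1 q.2 * (η q.2 * b q.1) ∂slabMeasure μ T :=
  (integral_prod_symm _ (integrable_bounded_mul_prod ha haK hη hb)).symm

lemma abs_fracInt_le_const {α : ℝ} {f : ℝ → ℝ} (hα : 0 < α) (hfK : ∀ t ∈ Set.Ioc 0 T, |f t| ≤ K) :
    ∀ t ∈ Set.Ioc 0 T, |fracInt α f t| ≤ K * T ^ α / Gamma (α + 1) := by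
  intro t ht
  have hK : 0 ≤ K := (abs_nonneg _).trans (hfK t ht)
  calc |fracInt α f t| ≤ K * t ^ α / Gamma (α + 1) :=
        abs_fracInt_le hα ht.1.le fun s hs ↦ hfK s (Set.Ioc_subset_Ioc_right ht.2 hs)
    _ ≤ K * T ^ α / Gamma (α + 1) := by
        gcongr
        exacts [ht.1.le, ht.2]

lemma integral_fracInt_mul_sub_pow [SFinite μ] {α : ℝ} {f : Z → ℝ → ℝ} {b : Z → ℝ}
    (hα : 0 < α) (hT : 0 ≤ T)
    (hf : AEStronglyMeasurable (fun q : Z × ℝ ↦ f q.1 q.2) (slabMeasure μ T))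
    (hfK : ∀ z, ∀ t ∈ Set.Ioc 0 T, |f z t| ≤ K)
    (hF : AEStronglyMeasurable (fun q : Z × ℝ ↦ fracInt α (f q.1) q.2) (slabMeasure μ T))
    (hb : Integrable b μ) (n : ℕ) :
    ∫ q, fracInt α (f q.1) q.2 * ((T - q.2) ^ n * b q.1) ∂slabMeasure μ T =
      Gamma (n + 1) / Gamma (α + n + 1) *
        ∫ q, f q.1 q.2 * ((T - q.2) ^ (α + n) * b q.1) ∂slabMeasure μ T := by
  have hslice : ∀ᵐ z ∂μ, IntegrableOn (f z) (Set.Ioc 0 T) := by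
    filter_upwards [hf.prodMk_left] with z hz
    exact .of_bound measure_Ioc_lt_top hz K (ae_restrict_of_forall_mem measurableSet_Ioc (hfK z))
  rw [integral_prod _ (integrable_bounded_mul_prod (η := fun t ↦ (T - t) ^ n) hF
      (fun z ↦ abs_fracInt_le_const hα (hfK z)) (by fun_prop) hb),
    integral_prod _ (integrable_bounded_mul_prod (η := fun t ↦ (T - t) ^ (α + n)) hf hfK
      (.rpow_const (by fun_prop) fun t _ ↦ Or.inr (by positivity)) hb), ← integral_const_mul]
  refine integral_congr_ae ?_
  filter_upwards [hslice] with z hz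
  simp only [← mul_assoc, integral_mul_const]
  simp only [mul_comm (f z _), mul_comm (fracInt α (f z) _),
    integral_sub_pow_mul_fracInt hα hT hz]

end Slab

lemma hasDerivAt_max_zero_pow (n : ℕ) (x : ℝ) :
    HasDerivAt (fun x : ℝ ↦ max x 0 ^ (n + 2)) ((n + 2) * max x 0 ^ (n + 1)) x := by
  rcases lt_trichotomy x 0 with hx | rfl | hx
  · have hzero : (fun x : ℝ ↦ max x 0 ^ (n + 2)) =ᶠ[nhds x] fun _ ↦ 0 := by
      filter_upwards [gt_mem_nhds hx] with y hy
      simp [hy.le]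
    simpa [hx.le] using (hasDerivAt_const x (0 : ℝ)).congr_of_eventuallyEq hzero
  · have hbound : (fun x : ℝ ↦ max x 0 ^ (n + 2)) =O[nhds 0] fun x ↦ ‖x - 0‖ ^ (n + 2) := by
      refine .of_norm_le fun x ↦ ?_
      rw [sub_zero, norm_pow]
      gcongr
      simp [abs_of_nonneg, le_abs_self]
    simpa [HasDerivAt, HasDerivAtFilter, HasFDerivAt] using hbound.hasFDerivAt (by lia)
  · have hpow : (fun x : ℝ ↦ max x 0 ^ (n + 2)) =ᶠ[nhds x] fun x ↦ x ^ (n + 2) := by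
      filter_upwards [lt_mem_nhds hx] with y hy
      simp [hy.le]
    simpa [hx.le] using (hasDerivAt_pow (n + 2) x).congr_of_eventuallyEq hpow

lemma contDiff_max_zero_pow (n : ℕ) : ContDiff ℝ n (fun x : ℝ ↦ max x 0 ^ (n + 1)) := by
  induction n with
  | zero => exact contDiff_zero.2 (by fun_prop)
  | succ n ih =>
    rw [Nat.cast_succ]
    refine contDiff_succ_iff_deriv.2
      ⟨fun x ↦ (hasDerivAt_max_zero_pow n x).differentiableAt, by simp, ?_⟩
    rw [funext fun x ↦ (hasDerivAt_max_zero_pow n x).deriv]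
    exact contDiff_const.mul ih

lemma tendsto_exp_neg_mul_norm_cocompact {E : Type*} [NormedAddCommGroup E] [ProperSpace E]
    {a : ℝ} (ha : 0 < a) : Tendsto (fun z : E ↦ exp (-a * ‖z‖)) (cocompact E) (nhds 0) :=
  tendsto_exp_atBot.comp
    ((tendsto_norm_cocompact_atTop).const_mul_atTop_of_neg (neg_lt_zero.2 ha))

lemma integrable_exp_neg_mul_norm {E : Type*} [NormedAddCommGroup E] [NormedSpace ℝ E]
    [FiniteDimensional ℝ E] [MeasurableSpace E] [BorelSpace E] (μ : Measure E)
    [μ.IsAddHaarMeasure] {a : ℝ} (ha : 0 < a) : Integrable (fun z : E ↦ exp (-a * ‖z‖)) μ := by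
  have : ProperSpace E := FiniteDimensional.proper_real E
  set r : ℝ := Module.finrank ℝ E + 1
  have hint : Integrable (fun z : E ↦ (1 + ‖z‖) ^ (-r)) μ := integrable_one_add_norm (lt_add_one _)
  have hshift : (fun z : E ↦ exp (-a * ‖z‖)) =O[cocompact E] fun z ↦ exp (-a * (1 + ‖z‖)) :=
    .of_bound (exp a) (.of_forall fun z ↦ by
      rw [norm_of_nonneg (exp_pos _).le, norm_of_nonneg (exp_pos _).le, ← exp_add]
      exact (congrArg exp (by ring)).le)
  have hdecay : (fun z : E ↦ exp (-a * (1 + ‖z‖))) =O[cocompact E] fun z ↦ (1 + ‖z‖) ^ (-r) :=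
    ((isLittleO_exp_neg_mul_rpow_atTop ha (-r)).comp_tendsto
      (tendsto_atTop_add_const_left _ 1 tendsto_norm_cocompact_atTop)).isBigO
  have hcont : Continuous fun z : E ↦ exp (-a * ‖z‖) := by fun_prop
  exact hcont.locallyIntegrable.integrable_of_isBigO_cocompact (hshift.trans hdecay)
    (hint.integrableAtFilter _)

section GrushinCalculus

variable {N k : ℕ} {f : Euc N × Euc k → ℝ}

lemma contDiff_fderiv_apply (hf : ContDiff ℝ 2 f) (v : Euc N × Euc k) :
    ContDiff ℝ 1 fun z ↦ fderiv ℝ f z v :=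
  (hf.fderiv_right (by norm_num)).clm_apply contDiff_const

lemma continuous_secondDeriv (hf : ContDiff ℝ 2 f) (v : Euc N × Euc k) :
    Continuous fun z ↦ secondDeriv f z v :=
  ((contDiff_fderiv_apply hf v).continuous_fderiv one_ne_zero).clm_apply continuous_const

lemma continuous_grushin (hf : ContDiff ℝ 2 f) : Continuous (grushin f) := by
  have hcont := continuous_secondDeriv hf
  unfold grushin laplacianX laplacianY
  fun_prop

lemma tsupport_secondDeriv_subset (v : Euc N × Euc k) :
    tsupport (fun z ↦ secondDeriv f z v) ⊆ tsupport f :=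
  (tsupport_fderiv_apply_subset ℝ v).trans (tsupport_fderiv_apply_subset ℝ v)

lemma hasCompactSupport_grushin (hf : HasCompactSupport f) : HasCompactSupport (grushin f) := by
  refine .intro hf fun z hz ↦ ?_
  have hzero (v : Euc N × Euc k) : secondDeriv f z v = 0 :=
    image_eq_zero_of_notMem_tsupport (f := fun z ↦ secondDeriv f z v)
      fun h ↦ hz (tsupport_secondDeriv_subset v h)
  simp [grushin, laplacianX, laplacianY, hzero]

lemma secondDeriv_comp {h h₁ : ℝ → ℝ} {h₂ : ℝ} {z : Euc N × Euc k} (hf : ContDiff ℝ 2 f)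
    (hh : ∀ w, HasDerivAt h (h₁ (f w)) (f w)) (hh₁ : HasDerivAt h₁ h₂ (f z))
    (v : Euc N × Euc k) :
    secondDeriv (fun w ↦ h (f w)) z v =
      h₂ * fderiv ℝ f z v ^ 2 + h₁ (f z) * secondDeriv f z v := by
  have hdf (w) : HasFDerivAt f (fderiv ℝ f w) w := (hf.differentiable two_ne_zero w).hasFDerivAt
  have hddf : HasFDerivAt (fun w ↦ fderiv ℝ f w v) (fderiv ℝ (fun w ↦ fderiv ℝ f w v) z) z :=
    ((contDiff_fderiv_apply hf v).differentiable one_ne_zero z).hasFDerivAt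
  have hcomp (w) : HasFDerivAt (fun w ↦ h (f w)) (h₁ (f w) • fderiv ℝ f w) w :=
    (hh w).comp_hasFDerivAt w (hdf w)
  have hcomp₁ : HasFDerivAt (fun w ↦ h₁ (f w)) (h₂ • fderiv ℝ f z) z :=
    hh₁.comp_hasFDerivAt z (hdf z)
  have hprod := hcomp₁.fun_mul hddf
  simp only [secondDeriv, (hcomp _).fderiv, smul_apply, smul_eq_mul,
    hprod.fderiv, add_apply]
  ring

lemma grushin_const_mul (c : ℝ) (hf : ContDiff ℝ 2 f) (z : Euc N × Euc k) :
    grushin (fun w ↦ c * f w) z = c * grushin f z := by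
  have hsecond (v : Euc N × Euc k) :
      secondDeriv (fun w ↦ c * f w) z v = c * secondDeriv f z v := by
    simpa using secondDeriv_comp (h := fun s ↦ c * s) (h₁ := fun _ ↦ c) hf
      (fun w ↦ by simpa using (hasDerivAt_id (f w)).const_mul c) (hasDerivAt_const _ c) v
  simp only [grushin, laplacianX, laplacianY, hsecond, ← Finset.mul_sum]
  ring

lemma le_grushin_comp {h h₁ : ℝ → ℝ} {h₂ : ℝ} {z : Euc N × Euc k} (hf : ContDiff ℝ 2 f)
    (hh : ∀ w, HasDerivAt h (h₁ (f w)) (f w)) (hh₁ : HasDerivAt h₁ h₂ (f z)) (hh₂ : 0 ≤ h₂) :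
    h₁ (f z) * grushin f z ≤ grushin (fun w ↦ h (f w)) z := by
  have hsecond (v : Euc N × Euc k) :
      h₁ (f z) * secondDeriv f z v ≤ secondDeriv (fun w ↦ h (f w)) z v := by
    rw [secondDeriv_comp hf hh hh₁]
    exact le_add_of_nonneg_left (by positivity)
  simp only [grushin, laplacianX, laplacianY, mul_add, mul_left_comm _ (‖z.1‖ ^ 2),
    Finset.mul_sum (a := h₁ (f z))]
  gcongr <;> exact hsecond _

end GrushinCalculus

/-- The polynomial `1 + |x|⁴ + |y|²`, whose square root is a smooth substitute for the
homogeneous gauge `(|x|⁴ + |y|²)^{1/2}` of the Grushin operator. -/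
def grushinPoly {N k : ℕ} (z : Euc N × Euc k) : ℝ := 1 + ‖z.1‖ ^ 4 + ‖z.2‖ ^ 2

/-- The weight `exp (-a √(1 + |x|⁴ + |y|²))` against which the initial datum is tested. -/
def grushinWeight {N k : ℕ} (a : ℝ) (z : Euc N × Euc k) : ℝ := exp (-a * √(grushinPoly z))

/-- A compactly supported `C²` approximation of `grushinWeight a` from below. The weight is the
cube of `grushinWeight (a / 3)`; the positive part is taken before cubing to stay `C²`. -/
def truncatedWeight {N k : ℕ} (a δ : ℝ) (z : Euc N × Euc k) : ℝ :=
  max (grushinWeight (a / 3) z - δ) 0 ^ 3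

section Weight

variable {N k : ℕ}

lemma grushinPoly_pos (z : Euc N × Euc k) : 0 < grushinPoly z := by
  unfold grushinPoly
  positivity

lemma grushinPoly_eq :
    (grushinPoly : Euc N × Euc k → ℝ) = fun z ↦ 1 + (‖z.1‖ ^ 2) ^ 2 + ‖z.2‖ ^ 2 := by
  funext z
  rw [grushinPoly, ← pow_mul]

lemma contDiff_grushinPoly {n : WithTop ℕ∞} :
    ContDiff ℝ n (grushinPoly : Euc N × Euc k → ℝ) := by
  have hx : ContDiff ℝ n fun z : Euc N × Euc k ↦ ‖z.1‖ ^ 2 := contDiff_fst.norm_sq ℝ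
  have hy : ContDiff ℝ n fun z : Euc N × Euc k ↦ ‖z.2‖ ^ 2 := contDiff_snd.norm_sq ℝ
  rw [grushinPoly_eq]
  exact (contDiff_const.add (hx.pow 2)).add hy

lemma hasFDerivAt_norm_sq_fst (z : Euc N × Euc k) :
    HasFDerivAt (fun w : Euc N × Euc k ↦ ‖w.1‖ ^ 2)
      (2 • (innerSL ℝ z.1).comp (.fst ℝ (Euc N) (Euc k))) z :=
  hasFDerivAt_fst.norm_sq

lemma fderiv_grushinPoly (z v : Euc N × Euc k) :
    fderiv ℝ grushinPoly z v = 4 * ‖z.1‖ ^ 2 * inner ℝ z.1 v.1 + 2 * inner ℝ z.2 v.2 := by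
  have hy : HasFDerivAt (fun w : Euc N × Euc k ↦ ‖w.2‖ ^ 2) _ z := hasFDerivAt_snd.norm_sq
  have hP := (((hasFDerivAt_norm_sq_fst z).pow 2).const_add 1).fun_add hy
  rw [grushinPoly_eq, hP.fderiv]
  simp only [Nat.add_one_sub_one, pow_one, nsmul_eq_mul, Nat.cast_ofNat, add_apply, smul_apply,
    ContinuousLinearMap.comp_apply, ContinuousLinearMap.coe_fst', coe_innerSL_apply, smul_eq_mul,
    ContinuousLinearMap.coe_snd', add_left_inj]
  ring

lemma secondDeriv_grushinPoly_fst (z : Euc N × Euc k) (i : Fin N) :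
    secondDeriv grushinPoly z (EuclideanSpace.single i 1, 0) = 4 * ‖z.1‖ ^ 2 + 8 * z.1 i ^ 2 := by
  have hcoord : HasFDerivAt (fun w : Euc N × Euc k ↦ inner ℝ w.1 (EuclideanSpace.single i (1 : ℝ)))
      _ z := hasFDerivAt_fst.inner ℝ (hasFDerivAt_const _ _)
  have hprod := ((hasFDerivAt_norm_sq_fst z).const_mul 4).fun_mul hcoord
  simp only [secondDeriv, fderiv_grushinPoly, inner_zero_right, mul_zero, add_zero, hprod.fderiv]
  simp only [EuclideanSpace.inner_single_right, ringHom_apply, one_mul, add_apply, smul_apply,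
    ContinuousLinearMap.comp_apply, ContinuousLinearMap.prod_apply, ContinuousLinearMap.coe_fst',
    zero_apply, fderivInnerCLM_apply, inner_zero_right, inner_self_eq_norm_sq_to_K,
    PiLp.norm_single, norm_one, one_pow, zero_add, smul_eq_mul, mul_one, coe_innerSL_apply,
    nsmul_eq_mul, Nat.cast_ofNat, add_right_inj]
  ring

lemma secondDeriv_grushinPoly_snd (z : Euc N × Euc k) (j : Fin k) :
    secondDeriv grushinPoly z (0, EuclideanSpace.single j 1) = 2 := by
  have hcoord : HasFDerivAt (fun w : Euc N × Euc k ↦ inner ℝ w.2 (EuclideanSpace.single j (1 : ℝ)))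
      _ z := hasFDerivAt_snd.inner ℝ (hasFDerivAt_const _ _)
  simp only [secondDeriv, fderiv_grushinPoly, inner_zero_right, mul_zero, zero_add,
    (hcoord.const_mul 2).fderiv]
  simp

lemma grushin_grushinPoly (z : Euc N × Euc k) :
    grushin grushinPoly z = 2 * (2 * (N + 2) + k) * ‖z.1‖ ^ 2 := by
  have hsum : ∑ i, z.1 i ^ 2 = ‖z.1‖ ^ 2 := by simp [EuclideanSpace.norm_sq_eq]
  simp only [grushin, laplacianX, laplacianY, secondDeriv_grushinPoly_fst,
    secondDeriv_grushinPoly_snd, Finset.sum_add_distrib, ← Finset.mul_sum, hsum,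
    Finset.sum_const, Finset.card_univ, Fintype.card_fin, nsmul_eq_mul]
  ring

lemma norm_fst_sq_le_sqrt_grushinPoly (z : Euc N × Euc k) : ‖z.1‖ ^ 2 ≤ √(grushinPoly z) :=
  le_sqrt_of_sq_le (by unfold grushinPoly; nlinarith [sq_nonneg ‖z.2‖])

lemma norm_le_sqrt_grushinPoly (z : Euc N × Euc k) : ‖z‖ ≤ √(grushinPoly z) := by
  refine max_le (le_sqrt_of_sq_le ?_) (le_sqrt_of_sq_le ?_) <;> unfold grushinPoly <;>
    nlinarith [sq_nonneg (‖z.1‖ ^ 2 - 1), sq_nonneg ‖z.1‖, sq_nonneg ‖z.2‖]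

lemma grushinWeight_pos (a : ℝ) (z : Euc N × Euc k) : 0 < grushinWeight a z := exp_pos _

lemma grushinWeight_div_three_pow (a : ℝ) (z : Euc N × Euc k) :
    grushinWeight (a / 3) z ^ 3 = grushinWeight a z := by
  rw [grushinWeight, grushinWeight, ← exp_nat_mul]
  congr 1
  push_cast
  ring

lemma contDiff_grushinWeight (a : ℝ) {n : WithTop ℕ∞} :
    ContDiff ℝ n (grushinWeight a : Euc N × Euc k → ℝ) :=
  (contDiff_const.mul (contDiff_grushinPoly.sqrt fun z ↦ (grushinPoly_pos z).ne')).exp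

lemma grushinWeight_le_exp_neg_norm {a : ℝ} (ha : 0 ≤ a) (z : Euc N × Euc k) :
    grushinWeight a z ≤ exp (-a * ‖z‖) :=
  exp_le_exp.2 (mul_le_mul_of_nonpos_left (norm_le_sqrt_grushinPoly z) (neg_nonpos.2 ha))

lemma integrable_grushinWeight {a : ℝ} (ha : 0 < a) :
    Integrable (grushinWeight a : Euc N × Euc k → ℝ) := by
  have : (volume : Measure (Euc N × Euc k)).IsAddHaarMeasure :=
    inferInstanceAs ((volume : Measure (Euc N)).prod (volume : Measure (Euc k))).IsAddHaarMeasure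
  refine (integrable_exp_neg_mul_norm volume ha).mono'
    (contDiff_grushinWeight a (n := 0)).continuous.aestronglyMeasurable (.of_forall fun z ↦ ?_)
  rw [norm_of_nonneg (grushinWeight_pos a z).le]
  exact grushinWeight_le_exp_neg_norm ha.le z

lemma hasDerivAt_exp_neg_mul_sqrt (a : ℝ) {s : ℝ} (hs : 0 < s) :
    HasDerivAt (fun s ↦ exp (-a * √s)) (-(a / 2) * (exp (-a * √s) * (√s)⁻¹)) s := by
  refine ((hasDerivAt_sqrt hs.ne').const_mul (-a)).exp.congr_deriv ?_
  field_simp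

lemma hasDerivAt_exp_neg_mul_sqrt_mul_inv_sqrt (a : ℝ) {s : ℝ} (hs : 0 < s) :
    HasDerivAt (fun s ↦ -(a / 2) * (exp (-a * √s) * (√s)⁻¹))
      (a / 2 * (a / 2 * (√s)⁻¹ ^ 2 + 1 / 2 * (√s)⁻¹ ^ 3) * exp (-a * √s)) s := by
  have hsqrt := sqrt_pos.2 hs
  refine (((hasDerivAt_exp_neg_mul_sqrt a hs).fun_mul
    ((hasDerivAt_sqrt hs.ne').fun_inv hsqrt.ne')).const_mul (-(a / 2))).congr_deriv ?_
  field_simp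
  ring

-- `s ↦ exp (-a √s)` is convex, so only the first-order term of the chain rule matters.
lemma neg_mul_grushinWeight_le_grushin {a : ℝ} (ha : 0 ≤ a) (z : Euc N × Euc k) :
    -(a * (2 * (N + 2) + k) * grushinWeight a z) ≤ grushin (grushinWeight a) z := by
  have hsqrt := sqrt_pos.2 (grushinPoly_pos z)
  have hratio : (√(grushinPoly z))⁻¹ * ‖z.1‖ ^ 2 ≤ 1 :=
    inv_mul_le_one_of_le₀ (norm_fst_sq_le_sqrt_grushinPoly z) hsqrt.le
  have hweight := (grushinWeight_pos a z).le
  calc -(a * (2 * (N + 2) + k) * grushinWeight a z)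
    _ ≤ -(a * (2 * (N + 2) + k) * grushinWeight a z * ((√(grushinPoly z))⁻¹ * ‖z.1‖ ^ 2)) :=
      neg_le_neg (mul_le_of_le_one_right (by positivity) hratio)
    _ = -(a / 2) * (exp (-a * √(grushinPoly z)) * (√(grushinPoly z))⁻¹) *
          grushin grushinPoly z := by
      rw [grushin_grushinPoly, grushinWeight]
      ring
    _ ≤ grushin (grushinWeight a) z :=
      le_grushin_comp (h := fun s ↦ exp (-a * √s)) contDiff_grushinPoly
        (fun w ↦ hasDerivAt_exp_neg_mul_sqrt a (grushinPoly_pos w))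
        (hasDerivAt_exp_neg_mul_sqrt_mul_inv_sqrt a (grushinPoly_pos z)) (by positivity)

lemma contDiff_truncatedWeight (a δ : ℝ) :
    ContDiff ℝ 2 (truncatedWeight a δ : Euc N × Euc k → ℝ) :=
  (contDiff_max_zero_pow 2).comp ((contDiff_grushinWeight (a / 3)).sub contDiff_const)

lemma truncatedWeight_nonneg (a δ : ℝ) (z : Euc N × Euc k) : 0 ≤ truncatedWeight a δ z :=
  pow_nonneg (le_max_right _ _) 3

lemma truncatedWeight_le (a : ℝ) {δ : ℝ} (hδ : 0 ≤ δ) (z : Euc N × Euc k) :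
    truncatedWeight a δ z ≤ grushinWeight a z := by
  rw [← grushinWeight_div_three_pow]
  exact pow_le_pow_left₀ (le_max_right _ _)
    (max_le (sub_le_self _ hδ) (grushinWeight_pos _ z).le) 3

lemma hasCompactSupport_truncatedWeight {a δ : ℝ} (ha : 0 < a) (hδ : 0 < δ) :
    HasCompactSupport (truncatedWeight a δ : Euc N × Euc k → ℝ) := by
  have hlt : ∀ᶠ z : Euc N × Euc k in cocompact _, exp (-(a / 3) * ‖z‖) < δ :=
    (tendsto_exp_neg_mul_norm_cocompact (by positivity)).eventually_lt_const hδ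
  obtain ⟨K, hK, hKδ⟩ := (hasBasis_cocompact.eventually_iff).1 hlt
  refine .intro hK fun z hz ↦ ?_
  have hle : grushinWeight (a / 3) z ≤ δ :=
    (grushinWeight_le_exp_neg_norm (by positivity) z).trans (hKδ hz).le
  simp [truncatedWeight, hle]

lemma neg_mul_grushinWeight_le_grushin_truncatedWeight {a δ : ℝ} (ha : 0 ≤ a) (hδ : 0 ≤ δ)
    (z : Euc N × Euc k) :
    -(a * (2 * (N + 2) + k) * grushinWeight a z) ≤ grushin (truncatedWeight a δ) z := by
  set q : Euc N × Euc k → ℝ := grushinWeight (a / 3)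
  have hq := grushinWeight_pos (a / 3) z
  have hderiv (n : ℕ) (s : ℝ) : HasDerivAt (fun s ↦ max (s - δ) 0 ^ (n + 2))
      ((n + 2) * max (s - δ) 0 ^ (n + 1)) s :=
    (hasDerivAt_max_zero_pow n (s - δ)).comp_sub_const s δ
  have hmax : max (q z - δ) 0 ≤ q z := max_le (sub_le_self _ hδ) hq.le
  calc -(a * (2 * (N + 2) + k) * grushinWeight a z)
    _ = 3 * q z ^ 2 * -(a / 3 * (2 * (N + 2) + k) * q z) := by
      rw [← grushinWeight_div_three_pow]
      ring
    _ ≤ 3 * max (q z - δ) 0 ^ 2 * -(a / 3 * (2 * (N + 2) + k) * q z) := by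
      refine mul_le_mul_of_nonpos_right ?_ (neg_nonpos.2 (by positivity))
      gcongr
    _ ≤ 3 * max (q z - δ) 0 ^ 2 * grushin q z := by
      gcongr
      exact neg_mul_grushinWeight_le_grushin (by positivity) z
    _ ≤ grushin (truncatedWeight a δ) z := by
      refine le_grushin_comp (h := fun s ↦ max (s - δ) 0 ^ 3)
        (h₁ := fun s ↦ 3 * max (s - δ) 0 ^ 2) (contDiff_grushinWeight (a / 3))
        (fun w ↦ (hderiv 1 (q w)).congr_deriv (by norm_num)) ((hderiv 0 (q z)).const_mul 3) ?_
      positivity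

lemma tendsto_integral_mul_truncatedWeight {a : ℝ} {f : Euc N × Euc k → ℝ}
    (hf : Integrable fun z ↦ f z * grushinWeight a z) :
    Tendsto (fun δ ↦ ∫ z, f z * truncatedWeight a δ z) (nhdsWithin 0 (Set.Ioi 0))
      (nhds (∫ z, f z * grushinWeight a z)) := by
  refine tendsto_integral_filter_of_dominated_convergence (fun z ↦ ‖f z * grushinWeight a z‖)
    (.of_forall fun δ ↦ ?_) ?_ hf.norm (.of_forall fun z ↦ ?_)
  · have hratio : Continuous fun z : Euc N × Euc k ↦ truncatedWeight a δ z / grushinWeight a z :=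
      (contDiff_truncatedWeight a δ).continuous.div₀ (contDiff_grushinWeight a (n := 0)).continuous
        fun z ↦ (grushinWeight_pos a z).ne'
    refine (hf.aestronglyMeasurable.mul hratio.aestronglyMeasurable).congr (.of_forall fun z ↦ ?_)
    have := (grushinWeight_pos a z).ne'
    simp only [Pi.mul_apply]
    field_simp
  · filter_upwards [self_mem_nhdsWithin] with δ hδ
    refine .of_forall fun z ↦ ?_
    rw [norm_mul, norm_mul, norm_of_nonneg (truncatedWeight_nonneg a δ z),
      norm_of_nonneg (grushinWeight_pos a z).le]
    exact mul_le_mul_of_nonneg_left (truncatedWeight_le a hδ.le z) (norm_nonneg _)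
  · have hcont : Continuous fun δ ↦ f z * truncatedWeight a δ z := by
      unfold truncatedWeight
      fun_prop
    have hlim := (hcont.tendsto 0).mono_left (nhdsWithin_le_nhds (s := Set.Ioi 0))
    rwa [truncatedWeight, sub_zero, max_eq_left (grushinWeight_pos _ z).le,
      grushinWeight_div_three_pow] at hlim

end Weight

lemma exists_contDiff_hasCompactSupport_eventuallyEq {η : ℝ → ℝ} {n : ℕ∞} {s : Set ℝ}
    (hη : ContDiff ℝ n η) (hs : Bornology.IsBounded s) :
    ∃ χ : ℝ → ℝ, ContDiff ℝ n χ ∧ HasCompactSupport χ ∧ ∀ t ∈ s, χ =ᶠ[nhds t] η := by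
  obtain ⟨R, hR, hsR⟩ := hs.subset_ball_lt 0 0
  let bump : ContDiffBump (0 : ℝ) := ⟨R, R + 1, hR, lt_add_one R⟩
  refine ⟨fun t ↦ bump t * η t, bump.contDiff.mul hη, bump.hasCompactSupport.mul_right,
    fun t ht ↦ ?_⟩
  filter_upwards [bump.eventuallyEq_one_of_mem_ball (hsR ht)] with r hr
  rw [hr, Pi.one_apply, one_mul]

/-- The constant `B(1 - γ, m + 2)` produced when the memory kernel `t ^ (-γ)` is moved onto
`(T - t) ^ (m + 1)` by exchanging the order of integration. -/
def memoryCoeff (γ : ℝ) (m : ℕ) : ℝ := Gamma (1 - γ) * Gamma (m + 2) / Gamma (m + 3 - γ)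

lemma memoryCoeff_pos {γ : ℝ} (hγ : γ < 1) (m : ℕ) : 0 < memoryCoeff γ m := by
  have := m.cast_nonneg (α := ℝ)
  exact div_pos (mul_pos (Gamma_pos_of_pos (by linarith)) (Gamma_pos_of_pos (by linarith)))
    (Gamma_pos_of_pos (by linarith))

/-- The integrand on `Z × (0, T]` obtained by testing the equation against
`(T - t) ^ (m + 1) * w z`, with `g` in the role of `Δ_G w` and the memory kernel already moved onto
the test function. -/
def testIntegrand {Z : Type*} (γ p T : ℝ) (m : ℕ) (u : Z → ℝ → ℝ) (w g : Z → ℝ) (q : Z × ℝ) : ℝ :=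
  (m + 1) * (u q.1 q.2 * ((T - q.2) ^ m * w q.1)) - u q.1 q.2 * ((T - q.2) ^ (m + 1) * g q.1) -
    memoryCoeff γ m * (absPow p (u q.1 q.2) * ((T - q.2) ^ (m + 2 - γ) * w q.1))

/-- Jointly measurable functions on the slab `Z × (0, T]` with values in `[0, M]`. -/
structure IsBoundedNonneg {Z : Type*} [MeasurableSpace Z] (μ : Measure Z) (T M : ℝ)
    (u : Z → ℝ → ℝ) : Prop where
  aestronglyMeasurable : AEStronglyMeasurable (fun q : Z × ℝ ↦ u q.1 q.2) (slabMeasure μ T)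
  mem_Icc : ∀ z, ∀ t ∈ Set.Ioc 0 T, u z t ∈ Set.Icc 0 M

namespace IsBoundedNonneg

variable {Z : Type*} [MeasurableSpace Z] {μ : Measure Z} {γ p T M : ℝ} {u : Z → ℝ → ℝ}
  {w g : Z → ℝ}

lemma abs_le (hu : IsBoundedNonneg μ T M u) : ∀ z, ∀ t ∈ Set.Ioc 0 T, |u z t| ≤ M := by
  intro z t ht
  obtain ⟨h0, hM⟩ := hu.mem_Icc z t ht
  rwa [abs_of_nonneg h0]

lemma comp_absPow (hu : IsBoundedNonneg μ T M u) (hp : 0 < p) :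
    IsBoundedNonneg μ T (M ^ p) fun z t ↦ absPow p (u z t) where
  aestronglyMeasurable := by
    unfold absPow
    exact (((hu.aestronglyMeasurable.norm.aemeasurable.pow_const (p - 1)).mul
      hu.aestronglyMeasurable.aemeasurable)).aestronglyMeasurable
  mem_Icc z t ht := by
    obtain ⟨h0, hM⟩ := hu.mem_Icc z t ht
    rw [absPow_of_nonneg hp h0]
    exact ⟨rpow_nonneg h0 p, rpow_le_rpow h0 hM hp.le⟩

lemma integrable_mul_sub_pow (hu : IsBoundedNonneg μ T M u) (hw : Integrable w μ) (m : ℕ) :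
    Integrable (fun q ↦ u q.1 q.2 * ((T - q.2) ^ m * w q.1)) (slabMeasure μ T) :=
  integrable_bounded_mul_prod hu.aestronglyMeasurable hu.abs_le
    (η := fun t ↦ (T - t) ^ m) (by fun_prop) hw

lemma integrable_absPow_mul_sub_rpow (hu : IsBoundedNonneg μ T M u) (hγ : γ < 1) (hp : 0 < p)
    (hw : Integrable w μ) (m : ℕ) :
    Integrable (fun q ↦ absPow p (u q.1 q.2) * ((T - q.2) ^ (m + 2 - γ) * w q.1))
      (slabMeasure μ T) := by
  have hexponent : 0 ≤ m + 2 - γ := by linarith [m.cast_nonneg (α := ℝ)]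
  have hup := hu.comp_absPow hp
  exact integrable_bounded_mul_prod hup.aestronglyMeasurable hup.abs_le
    (η := fun t ↦ (T - t) ^ (m + 2 - γ)) (.rpow_const (by fun_prop) fun _ _ ↦ Or.inr hexponent) hw

lemma integrable_testIntegrand (hu : IsBoundedNonneg μ T M u) (hγ : γ < 1) (hp : 0 < p)
    (hw : Integrable w μ) (hg : Integrable g μ) (m : ℕ) :
    Integrable (testIntegrand γ p T m u w g) (slabMeasure μ T) :=
  (((hu.integrable_mul_sub_pow hw m).const_mul _).sub (hu.integrable_mul_sub_pow hg _)).sub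
    ((hu.integrable_absPow_mul_sub_rpow hγ hp hw m).const_mul _)

lemma integral_testIntegrand (hu : IsBoundedNonneg μ T M u) (hγ : γ < 1) (hp : 0 < p)
    (hw : Integrable w μ) (hg : Integrable g μ) (m : ℕ) :
    ∫ q, testIntegrand γ p T m u w g q ∂slabMeasure μ T =
      (m + 1) * (∫ q, u q.1 q.2 * ((T - q.2) ^ m * w q.1) ∂slabMeasure μ T) -
      (∫ q, u q.1 q.2 * ((T - q.2) ^ (m + 1) * g q.1) ∂slabMeasure μ T) -
      memoryCoeff γ m *
        ∫ q, absPow p (u q.1 q.2) * ((T - q.2) ^ (m + 2 - γ) * w q.1) ∂slabMeasure μ T := by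
  have htime := (hu.integrable_mul_sub_pow hw m).const_mul (m + 1 : ℝ)
  have hspace := hu.integrable_mul_sub_pow hg (m + 1)
  have hmemory := (hu.integrable_absPow_mul_sub_rpow hγ hp hw m).const_mul (memoryCoeff γ m)
  simp only [testIntegrand]
  rw [integral_sub (by exact htime.sub hspace) hmemory, integral_sub htime hspace,
    integral_const_mul, integral_const_mul]

end IsBoundedNonneg

namespace IsWeakSolutionMemory

variable {N k : ℕ} {γ p T M : ℝ} {u0 : Euc N × Euc k → ℝ} {u : Euc N × Euc k → ℝ → ℝ}
  {w : Euc N × Euc k → ℝ}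

lemma integral_mul_prod_test (h : IsWeakSolutionMemory N k γ p T u0 u) (hT : 0 ≤ T) {η : ℝ → ℝ}
    (hη : ContDiff ℝ 2 η) (hηT : η T = 0) (hw : ContDiff ℝ 2 w) (hwc : HasCompactSupport w) :
    -(η 0 * ∫ z, u0 z * w z) =
      Gamma (1 - γ) * (∫ t in Set.Ioc 0 T, ∫ z,
        fracInt (1 - γ) (fun s ↦ absPow p (u z s)) t * (η t * w z)) +
      (∫ t in Set.Ioc 0 T, ∫ z, u z t * (η t * grushin w z)) +
      ∫ t in Set.Ioc 0 T, ∫ z, u z t * (deriv η t * w z) := by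
  obtain ⟨χ, hχ, hχc, hχη⟩ :=
    exists_contDiff_hasCompactSupport_eventuallyEq (n := 2) hη (Metric.isBounded_Icc 0 T)
  have hχ_eq {t : ℝ} (ht : t ∈ Set.Icc 0 T) : χ t = η t := (hχη t ht).eq_of_nhds
  have hχT : χ T = 0 := (hχ_eq (Set.right_mem_Icc.2 hT)).trans hηT
  have hweak := h.2 (fun z t ↦ χ t * w z) ((hχ.comp contDiff_snd).mul (hw.comp contDiff_fst))
    (.intro (hwc.isCompact.prod hχc.isCompact) fun q hq ↦ ?_) (fun z ↦ by simp [hχT])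
  · have hderiv (z : Euc N × Euc k) (t : ℝ) : deriv (fun t ↦ χ t * w z) t = deriv χ t * w z :=
      deriv_mul_const (hχ.differentiable two_ne_zero t) _
    simp only [hχT, hχ_eq (Set.left_mem_Icc.2 hT), zero_mul, mul_zero, integral_zero, zero_sub,
      grushin_const_mul _ hw, mul_left_comm _ (η 0), integral_const_mul, hderiv] at hweak
    rw [hweak]
    congr 1
    · congr 1
      · exact congrArg _ (setIntegral_congr_fun measurableSet_Ioc fun t ht ↦ by
          simp only [hχ_eq (Set.Ioc_subset_Icc_self ht)])
      · exact setIntegral_congr_fun measurableSet_Ioc fun t ht ↦ by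
          simp only [hχ_eq (Set.Ioc_subset_Icc_self ht)]
    · exact setIntegral_congr_fun measurableSet_Ioc fun t ht ↦ by
        simp only [(hχη t (Set.Ioc_subset_Icc_self ht)).deriv_eq]
  · rcases not_and_or.1 hq with hq | hq <;> simp [image_eq_zero_of_notMem_tsupport hq]

lemma aestronglyMeasurable_fracInt (h : IsWeakSolutionMemory N k γ p T u0 u) :
    AEStronglyMeasurable (fun q : (Euc N × Euc k) × ℝ ↦
      fracInt (1 - γ) (fun s ↦ absPow p (u q.1 s)) q.2) (slabMeasure volume T) := by
  have hmeas := h.1.aestronglyMeasurable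
  rwa [Measure.volume_eq_prod, ← Measure.prod_restrict, Measure.restrict_univ,
    Measure.restrict_congr_set Ioo_ae_eq_Ioc] at hmeas

lemma pow_mul_integral_eq (h : IsWeakSolutionMemory N k γ p T u0 u)
    (hu : IsBoundedNonneg volume T M u) (hγ : γ < 1) (hp : 0 < p) (hT : 0 ≤ T) (m : ℕ)
    (hw : ContDiff ℝ 2 w) (hwc : HasCompactSupport w) :
    T ^ (m + 1) * ∫ z, u0 z * w z =
      ∫ q, testIntegrand γ p T m u w (grushin w) q ∂slabMeasure volume T := by
  have hwi : Integrable w := hw.continuous.integrable_of_hasCompactSupport hwc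
  have hgi : Integrable (grushin w) :=
    (continuous_grushin hw).integrable_of_hasCompactSupport (hasCompactSupport_grushin hwc)
  have hup := hu.comp_absPow hp
  have hα : 0 < 1 - γ := sub_pos.2 hγ
  have hderiv (t : ℝ) : deriv (fun t ↦ (T - t) ^ (m + 1)) t = -((m + 1) * (T - t) ^ m) := by
    simpa using (((hasDerivAt_id t).const_sub T).fun_pow (m + 1)).deriv
  have htest := h.integral_mul_prod_test hT (η := fun t ↦ (T - t) ^ (m + 1)) (by fun_prop)
    (by simp) hw hwc
  have hmemory := integral_fracInt_mul_sub_pow hα hT hup.aestronglyMeasurable hup.abs_le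
    h.aestronglyMeasurable_fracInt hwi (m + 1)
  simp only [hderiv, sub_zero] at htest
  rw [hu.integral_testIntegrand hγ hp hwi hgi, memoryCoeff, ← neg_inj, htest,
    integral_integral_bounded_mul_prod h.aestronglyMeasurable_fracInt
      (fun z ↦ abs_fracInt_le_const hα (hup.abs_le z)) (by fun_prop) hwi,
    integral_integral_bounded_mul_prod hu.aestronglyMeasurable hu.abs_le (by fun_prop) hgi,
    integral_integral_bounded_mul_prod hu.aestronglyMeasurable hu.abs_le (by fun_prop) hwi,
    hmemory]
  simp only [neg_mul, mul_neg, integral_neg, mul_assoc, mul_left_comm (u _ _) (m + 1 : ℝ),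
    integral_const_mul]
  push_cast
  ring_nf

end IsWeakSolutionMemory

lemma testIntegrand_le {Z : Type*} {m : ℕ} {γ p C L M T ψ : ℝ} {u : Z → ℝ → ℝ} {w g : Z → ℝ}
    {q : Z × ℝ} (hp : 0 < p) (hL : 0 ≤ L)
    (hyoung : ∀ v, 0 ≤ v → ∀ τ ∈ Set.Icc 0 T, (m + 1 + L * T) * (v * τ ^ m) ≤
      memoryCoeff γ m * (v ^ p * τ ^ (m + 2 - γ)) + C)
    (hq : q.2 ∈ Set.Ioc 0 T) (hu : u q.1 q.2 ∈ Set.Icc 0 M)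
    (hw : 0 ≤ w q.1) (hwψ : w q.1 ≤ ψ) (hg : -(L * ψ) ≤ g q.1) :
    testIntegrand γ p T m u w g q ≤ C * w q.1 + L * M * T ^ (m + 1) * (ψ - w q.1) := by
  obtain ⟨hu0, huM⟩ := hu
  have hτ0 : 0 ≤ T - q.2 := sub_nonneg.2 hq.2
  have hτT : T - q.2 ≤ T := sub_le_self T hq.1.le
  rw [testIntegrand, absPow_of_nonneg hp hu0]
  generalize u q.1 q.2 = v at *
  generalize T - q.2 = τ at *
  have hspace : -(v * (τ ^ (m + 1) * g q.1)) ≤ v * τ ^ (m + 1) * (L * ψ) := by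
    nlinarith [mul_le_mul_of_nonneg_left hg (by positivity : 0 ≤ v * τ ^ (m + 1))]
  have hinner : L * w q.1 * (v * τ ^ m) * τ ≤ L * w q.1 * (v * τ ^ m) * T :=
    mul_le_mul_of_nonneg_left hτT (by positivity)
  have houter : v * τ ^ (m + 1) * (L * (ψ - w q.1)) ≤ M * T ^ (m + 1) * (L * (ψ - w q.1)) := by
    have := mul_nonneg hL (sub_nonneg.2 hwψ)
    gcongr
    exact hu0.trans huM
  have hyoung_mul := mul_le_mul_of_nonneg_right (hyoung v hu0 τ ⟨hτ0, hτT⟩) hw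
  rw [pow_succ τ] at *
  linarith

namespace IsWeakSolutionMemory

variable {N k m : ℕ} {γ p T M L C ε : ℝ} {u0 : Euc N × Euc k → ℝ} {u : Euc N × Euc k → ℝ → ℝ}
  {w ψ : Euc N × Euc k → ℝ}

lemma pow_mul_integral_le (h : IsWeakSolutionMemory N k γ p T u0 u)
    (hu : IsBoundedNonneg volume T M u) (hγ : γ < 1) (hp : 0 < p) (hT : 0 ≤ T) (hL : 0 ≤ L)
    (hyoung : ∀ v, 0 ≤ v → ∀ τ ∈ Set.Icc 0 T, (m + 1 + L * T) * (v * τ ^ m) ≤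
      memoryCoeff γ m * (v ^ p * τ ^ (m + 2 - γ)) + C)
    (hw : ContDiff ℝ 2 w) (hwc : HasCompactSupport w) (hw0 : ∀ z, 0 ≤ w z)
    (hψ : Integrable ψ) (hwψ : ∀ z, w z ≤ ψ z) (hgw : ∀ z, -(L * ψ z) ≤ grushin w z) :
    T ^ (m + 1) * ∫ z, u0 z * w z ≤
      T * (C * (∫ z, w z) + L * M * T ^ (m + 1) * ((∫ z, ψ z) - ∫ z, w z)) := by
  have hwi : Integrable w := hw.continuous.integrable_of_hasCompactSupport hwc
  have hgi : Integrable (grushin w) :=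
    (continuous_grushin hw).integrable_of_hasCompactSupport (hasCompactSupport_grushin hwc)
  let bound (z : Euc N × Euc k) : ℝ := C * w z + L * M * T ^ (m + 1) * (ψ z - w z)
  have hψw : Integrable (fun z ↦ L * M * T ^ (m + 1) * (ψ z - w z)) := (hψ.sub hwi).const_mul _
  have hbound : Integrable bound := (hwi.const_mul C).add hψw
  calc T ^ (m + 1) * ∫ z, u0 z * w z
      = ∫ q, testIntegrand γ p T m u w (grushin w) q ∂slabMeasure volume T :=
        h.pow_mul_integral_eq hu hγ hp hT m hw hwc
    _ ≤ ∫ q, bound q.1 ∂slabMeasure volume T := by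
        refine integral_mono_ae (hu.integrable_testIntegrand hγ hp hwi hgi m)
          (hbound.comp_fst _) ?_
        filter_upwards [ae_slabMeasure_mem_Ioc] with q hq
        exact testIntegrand_le hp hL hyoung hq (hu.mem_Icc _ _ hq) (hw0 _) (hwψ _) (hgw _)
    _ = T * (C * (∫ z, w z) + L * M * T ^ (m + 1) * ((∫ z, ψ z) - ∫ z, w z)) := by
        rw [integral_slabMeasure_fst hT, integral_add (hwi.const_mul C) hψw,
          integral_const_mul, integral_const_mul, integral_sub hψ hwi]

lemma pow_mul_integral_mul_grushinWeight_le (h : IsWeakSolutionMemory N k γ p T u0 u)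
    (hu : IsBoundedNonneg volume T M u) (hγ : γ < 1) (hp : 0 < p) (hT : 0 ≤ T) (hε : 0 < ε)
    (hC : 0 ≤ C)
    (hyoung : ∀ v, 0 ≤ v → ∀ τ ∈ Set.Icc 0 T,
      (m + 1 + ε * (2 * (N + 2) + k) * T) * (v * τ ^ m) ≤
        memoryCoeff γ m * (v ^ p * τ ^ (m + 2 - γ)) + C) :
    T ^ (m + 1) * ∫ z, u0 z * grushinWeight ε z ≤
      T * (C * ∫ z : Euc N × Euc k, grushinWeight ε z) := by
  have hψ := integrable_grushinWeight (N := N) (k := k) hε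
  by_cases hu0 : Integrable fun z ↦ u0 z * grushinWeight ε z
  · have hlim_datum := (tendsto_integral_mul_truncatedWeight hu0).const_mul (T ^ (m + 1))
    have hlim_mass : Tendsto (fun δ ↦ ∫ z : Euc N × Euc k, truncatedWeight ε δ z)
        (nhdsWithin 0 (Set.Ioi 0)) (nhds (∫ z : Euc N × Euc k, grushinWeight ε z)) := by
      simpa only [one_mul] using
        tendsto_integral_mul_truncatedWeight (f := fun _ ↦ 1) (by simpa only [one_mul] using hψ)
    have hlim_error := (hlim_mass.const_sub (∫ z : Euc N × Euc k, grushinWeight ε z)).const_mul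
      (ε * (2 * (N + 2) + k) * M * T ^ (m + 1))
    have hlim_bound := ((hlim_mass.const_mul C).add hlim_error).const_mul T
    rw [sub_self, mul_zero, add_zero] at hlim_bound
    refine le_of_tendsto_of_tendsto hlim_datum hlim_bound ?_
    filter_upwards [self_mem_nhdsWithin] with δ hδ
    refine h.pow_mul_integral_le hu hγ hp hT (by positivity) hyoung
      (contDiff_truncatedWeight ε δ) (hasCompactSupport_truncatedWeight hε hδ)
      (truncatedWeight_nonneg ε δ) hψ (truncatedWeight_le ε (le_of_lt hδ)) fun z ↦ ?_
    exact neg_mul_grushinWeight_le_grushin_truncatedWeight hε.le (le_of_lt hδ) z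
  · rw [integral_undef hu0, mul_zero]
    exact mul_nonneg hT (mul_nonneg hC (integral_nonneg fun z ↦ (grushinWeight_pos ε z).le))

end IsWeakSolutionMemory

lemma exists_forall_integral_mul_grushinWeight_le (N k : ℕ) {γ p T ε : ℝ} (hγ : γ < 1)
    (hp : 1 < p) (hT : 0 < T) (hε : 0 < ε) :
    ∃ B, 0 ≤ B ∧ ∀ u0 u M, IsBoundedNonneg volume T M u → IsWeakSolutionMemory N k γ p T u0 u →
      ∫ z, u0 z * grushinWeight ε z ≤ B := by
  obtain ⟨m, hm⟩ := exists_nat_ge ((2 - γ) / (p - 1))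
  have hexponent : m + 2 - γ ≤ m * p := by
    linarith [(div_le_iff₀ (sub_pos.2 hp)).1 hm]
  have hexponent_nonneg : 0 ≤ m + 2 - γ := by linarith [m.cast_nonneg (α := ℝ)]
  obtain ⟨C, hC, hyoung⟩ := exists_mul_mul_pow_le (A := m + 1 + ε * (2 * (N + 2) + k) * T) hp
    (memoryCoeff_pos hγ m) (by positivity) hT.le hexponent_nonneg hexponent
  have hmass : 0 ≤ ∫ z : Euc N × Euc k, grushinWeight ε z :=
    integral_nonneg fun z ↦ (grushinWeight_pos ε z).le
  refine ⟨T * (C * ∫ z : Euc N × Euc k, grushinWeight ε z) / T ^ (m + 1), by positivity,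
    fun u0 u M hu h ↦ ?_⟩
  rw [le_div_iff₀' (pow_pos hT _)]
  exact h.pow_mul_integral_mul_grushinWeight_le hu hγ (by linarith) hT.le hε hC hyoung

lemma exists_isBoundedNonneg_of_continuousOn {X : Type*} [TopologicalSpace X]
    [MeasurableSpace X] [OpensMeasurableSpace X] (μ : Measure X) [SFinite μ]
    {U : ℝ → ZeroAtInftyContinuousMap X ℝ} {u : X → ℝ → ℝ} (hU : ContinuousOn U (Set.Ici 0))
    (hUu : ∀ t ∈ Set.Ici 0, ∀ z, U t z = u z t) (hu : ∀ z t, 0 ≤ t → 0 ≤ u z t) (T : ℝ) :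
    ∃ M, IsBoundedNonneg μ T M u := by
  have hUb : ContinuousOn (fun t ↦ (U t).toBCF) (Set.Icc 0 T) :=
    ZeroAtInftyContinuousMap.isometry_toBCF.continuous.comp_continuousOn
      (hU.mono Set.Icc_subset_Ici_self)
  obtain ⟨M, hM⟩ := isCompact_Icc.exists_bound_of_continuousOn hUb
  refine ⟨M, ⟨?_, fun z t ht ↦ ⟨hu z t ht.1.le, ?_⟩⟩⟩
  · have hcont : ContinuousOn (fun q : X × ℝ ↦ (U q.2).toBCF q.1) (Set.univ ×ˢ Set.Ioc 0 T) :=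
      (hUb.comp continuousOn_snd fun q hq ↦ Set.Ioc_subset_Icc_self hq.2).eval continuousOn_fst
    have hmeas := hcont.aestronglyMeasurable (μ := μ.prod volume)
      (MeasurableSet.univ.prod measurableSet_Ioc)
    rw [← Measure.prod_restrict, Measure.restrict_univ] at hmeas
    refine hmeas.congr ?_
    filter_upwards [ae_slabMeasure_mem_Ioc] with q hq
    exact hUu q.2 hq.1.le q.1
  · rw [← hUu t ht.1.le z]
    exact (le_abs_self _).trans
      (((U t).toBCF.norm_coe_le_norm z).trans (hM t (Set.Ioc_subset_Icc_self ht)))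

theorem no_global_weak_solution_memory_large_data_general (N k : ℕ) {γ p T ε : ℝ} (hγ : γ < 1)
    (hp : 1 < p) (hT : 0 < T) (hε : 0 < ε) :
    ∃ B : ℝ, 0 < B ∧ ∀ u0 : Euc N × Euc k → ℝ, B ≤ ∫ z, u0 z * grushinWeight ε z →
      ¬ ∃ u M, IsBoundedNonneg volume T M u ∧ IsWeakSolutionMemory N k γ p T u0 u := by
  obtain ⟨B, hB0, hB⟩ := exists_forall_integral_mul_grushinWeight_le N k hγ hp hT hε
  refine ⟨B + 1, by positivity, fun u0 hu0 ⟨u, M, hu, h⟩ ↦ ?_⟩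
  linarith [hB u0 u M hu h]

/-- **Remark (nonexistence for large initial data).**
Let `0 ≤ γ < 1`, `p > 1`, and `ε = 1/(2(N+2)+k)`. There is a constant `B > 0` such that,
if `u0 ∈ C₀(ℝ^{N+k})`, `u0 ≥ 0`, satisfies
`∫ u0(x,y) exp(−ε√(1+|x|⁴+|y|²)) dxdy ≥ B`, then there is no global nonnegative weak
solution in `C([0,∞), C₀(ℝ^{N+k}))` of
`u_t − Δ_G u = ∫_0^t (t−s)^{−γ}|u|^{p−1}u(s) ds`, `u(·,0) = u0`. -/
theorem no_global_weak_solution_memory_large_data (N k : ℕ) (hN : 1 ≤ N) (hk : 1 ≤ k)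
    (γ p : ℝ) (hγ0 : 0 ≤ γ) (hγ1 : γ < 1) (hp : 1 < p) :
    ∃ B : ℝ, 0 < B ∧
      ∀ u0 : Euc N × Euc k → ℝ, Continuous u0 →
        Tendsto u0 (cocompact (Euc N × Euc k)) (nhds 0) → (∀ z, 0 ≤ u0 z) →
        B ≤ (∫ z : Euc N × Euc k,
              u0 z * Real.exp (-(1 / (2 * ((N : ℝ) + 2) + k)) *
                Real.sqrt (1 + ‖z.1‖ ^ 4 + ‖z.2‖ ^ 2))) →
        ¬ ∃ u : Euc N × Euc k → ℝ → ℝ,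
            (∀ z : Euc N × Euc k, ∀ t : ℝ, 0 ≤ t → 0 ≤ u z t) ∧
            (∃ U : ℝ → ZeroAtInftyContinuousMap (Euc N × Euc k) ℝ,
              ContinuousOn U (Set.Ici 0) ∧ ∀ t ∈ Set.Ici (0 : ℝ), ∀ z, U t z = u z t) ∧
            (∀ T : ℝ, 0 < T → IsWeakSolutionMemory N k γ p T u0 u) := by
  obtain ⟨B, hB0, hB⟩ := no_global_weak_solution_memory_large_data_general N k hγ1 hp one_pos
    (ε := 1 / (2 * ((N : ℝ) + 2) + k)) (by positivity)
  refine ⟨B, hB0, fun u0 _ _ _ hu0 ⟨u, hu, ⟨U, hU, hUu⟩, h⟩ ↦ ?_⟩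
  obtain ⟨M, hM⟩ := exists_isBoundedNonneg_of_continuousOn volume hU hUu hu 1
  exact hB u0 hu0 ⟨u, M, hM, h 1 one_pos⟩
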